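/- In a two-player finite game, if σ is the unique Nash equilibrium, then σ is quasi-strict: for each player n, every pure strategy outside the support of σ_n is a strictly inferior reply to σ. -/

import Mathlib

open Finset

variable {S1 S2 : Type*}

/-- `σ` is a mixed strategy on the finite set `S`. -/
def IsMixed {S : Type*} [Fintype S] (σ : S → ℝ) : Prop :=
  (∀ s, 0 ≤ σ s) ∧ ∑ s, σ s = 1

/-- Expected payoff in a bimatrix game with payoff function `G`. -/
noncomputable def bimatPay [Fintype S1] [Fintype S2]
    (G : S1 → S2 → ℝ) (σ : S1 → ℝ) (τ : S2 → ℝ) : ℝ :=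
  ∑ a, ∑ b, σ a * τ b * G a b

/-- `(x, y)` is a Nash equilibrium of the two-player game `(A, B)`. -/
def IsNash2 [Fintype S1] [Fintype S2]
    (A B : S1 → S2 → ℝ) (x : S1 → ℝ) (y : S2 → ℝ) : Prop :=
  IsMixed x ∧ IsMixed y ∧
  (∀ x', IsMixed x' → bimatPay A x' y ≤ bimatPay A x y) ∧
  (∀ y', IsMixed y' → bimatPay B x y' ≤ bimatPay B x y)

section Scarf

variable {V I : Type*}

/-- Every element of `V` lies, in some of the orders induced by the `f i`, weakly below all
of `U`. -/
def IsDominant (f : I → V → ℕ) (U : Finset V) : Prop :=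
  ∀ v, ∃ i, ∀ u ∈ U, f i v ≤ f i u

/-- `v` is the `f a`-largest among the elements exceeding `m i` in all orders `i ≠ a`. -/
def IsExchange (f : I → V → ℕ) (m : I → V) (a : I) (v : V) : Prop :=
  (∀ i ≠ a, f i (m i) < f i v) ∧ ∀ w, (∀ i ≠ a, f i (m i) < f i w) → f a w ≤ f a v

lemma IsDominant.mono {f : I → V → ℕ} {U U' : Finset V} (h : IsDominant f U) (hU : U' ⊆ U) :
    IsDominant f U' := fun v =>
  (h v).imp fun _ hi u hu => hi u (hU hu)

lemma exists_isExchange [Fintype V] {f : I → V → ℕ} {m : I → V} {a : I} {w : V}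
    (hw : ∀ i ≠ a, f i (m i) < f i w) : ∃ v, IsExchange f m a v := by
  classical
  obtain ⟨v, hv, hmax⟩ := exists_max_image
    (univ.filter fun w => ∀ i ≠ a, f i (m i) < f i w) (f a) ⟨w, by simpa using hw⟩
  simp only [mem_filter, mem_univ, true_and] at hv hmax
  exact ⟨v, hv, hmax⟩

lemma IsExchange.eq {f : I → V → ℕ} (hf : ∀ i, Function.Injective (f i)) {m : I → V} {a : I}
    {v w : V} (hv : IsExchange f m a v) (hw : IsExchange f m a w) : v = w :=
  hf a (le_antisymm (hw.2 v hv.1) (hv.2 w hw.1))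

lemma IsExchange.le {f : I → V → ℕ} {U : Finset V} {m : I → V} (hmU : ∀ i, m i ∈ U)
    (hU : IsDominant f U) {a : I} {v : V} (hv : IsExchange f m a v) : f a v ≤ f a (m a) := by
  obtain ⟨i, hi⟩ := hU v
  by_cases h : i = a
  · exact h ▸ hi _ (hmU i)
  · exact absurd (hi _ (hmU i)) (not_le.2 (hv.1 i h))

lemma IsExchange.isDominant_insert [DecidableEq V]
    {f : I → V → ℕ} (hf : ∀ i, Function.Injective (f i))
    {U : Finset V} {m : I → V} (hmU : ∀ i, m i ∈ U) (hm : ∀ i, ∀ u ∈ U, f i (m i) ≤ f i u)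
    (hU : IsDominant f U) {a b : I} (hba : b ≠ a) (hab : m b = m a) {v : V}
    (hv : IsExchange f m a v) : v ∉ U ∧ IsDominant f (insert v U) := by
  constructor
  · intro hvU
    have h := hf a (le_antisymm (hv.le hmU hU) (hm a v hvU))
    have h2 := hv.1 b hba
    rw [hab, h] at h2
    exact lt_irrefl _ h2
  · intro w
    by_cases hw : ∀ i ≠ a, f i (m i) < f i w
    · refine ⟨a, fun u hu => (hv.2 w hw).trans ?_⟩
      rcases mem_insert.1 hu with rfl | hu
      · exact le_rfl
      · exact (hv.le hmU hU).trans (hm a u hu)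
    · push Not at hw
      obtain ⟨i, hia, hi⟩ := hw
      refine ⟨i, fun u hu => hi.trans ?_⟩
      rcases mem_insert.1 hu with rfl | hu
      · exact (hv.1 i hia).le
      · exact hm i u hu

lemma injOn_ne_of_double [DecidableEq V] [Fintype I] [DecidableEq I] {U : Finset V} {m : I → V}
    (hsurj : ∀ u ∈ U, ∃ i, m i = u) (hcard : U.card + 1 = Fintype.card I) {a b : I}
    (hba : b ≠ a) (hab : m b = m a) {j k : I} (hj : j ≠ a) (hk : k ≠ a) (h : m j = m k) :
    j = k := by
  have hsub : U ⊆ (univ.erase a).image m := by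
    intro u hu
    obtain ⟨i, rfl⟩ := hsurj u hu
    by_cases hi : i = a
    · subst hi
      exact mem_image.2 ⟨b, by simpa using hba, hab⟩
    · exact mem_image.2 ⟨i, by simpa using hi, rfl⟩
  have h1 : (univ.erase a).card = U.card := by
    rw [card_erase_of_mem (mem_univ a), card_univ]; omega
  have h2 : ((univ.erase a).image m).card = (univ.erase a).card :=
    le_antisymm card_image_le (h1 ▸ card_le_card hsub)
  exact card_image_iff.1 h2 (by simpa using hj) (by simpa using hk) h

lemma exists_isExchange_of_isDominant_insert [DecidableEq V] [Fintype I] [DecidableEq I]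
    {f : I → V → ℕ} (hf : ∀ i, Function.Injective (f i))
    {U : Finset V} {m : I → V} (hmU : ∀ i, m i ∈ U) (hm : ∀ i, ∀ u ∈ U, f i (m i) ≤ f i u)
    (hcard : U.card + 1 = Fintype.card I) {v : V} (hv : v ∉ U)
    (hd : IsDominant f (insert v U)) : ∃ a, (∃ b, b ≠ a ∧ m b = m a) ∧ IsExchange f m a v := by
  have key : ∀ u ∈ U, ∃ i, m i = u ∧ f i (m i) < f i v := by
    intro u hu
    obtain ⟨i, hi⟩ := hd u
    have h1 : m i = u :=
      hf i (le_antisymm (hm i u hu) (hi _ (mem_insert_of_mem (hmU i))))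
    refine ⟨i, h1, h1 ▸ lt_of_le_of_ne (hi v (mem_insert_self _ _)) fun h => hv (hf i h ▸ hu)⟩
  obtain ⟨a, ha⟩ := hd v
  have ha' : f a v ≤ f a (m a) := ha _ (mem_insert_of_mem (hmU a))
  have hne : ∀ i, f i (m i) < f i v → i ≠ a := by
    rintro i hi rfl; omega
  obtain ⟨b, hb, hbv⟩ := key (m a) (hmU a)
  have hlt : ∀ i ≠ a, f i (m i) < f i v := by
    intro j hj
    obtain ⟨i, hi, hiv⟩ := key (m j) (hmU j)
    rwa [injOn_ne_of_double (fun u hu => (key u hu).imp fun _ h => h.1) hcard (hne b hbv) hb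
      (hne i hiv) hj hi] at hiv
  refine ⟨a, ⟨b, hne b hbv, hb⟩, hlt, fun w hw => ?_⟩
  obtain ⟨i, hi⟩ := hd w
  by_cases hia : i = a
  · exact hia ▸ hi v (mem_insert_self _ _)
  · exact absurd (hi _ (mem_insert_of_mem (hmU i))) (not_le.2 (hw i hia))

lemma exists_min_choice (f : I → V → ℕ) {U : Finset V} (hU : U.Nonempty) :
    ∃ m : I → V, (∀ i, m i ∈ U) ∧ ∀ i, ∀ u ∈ U, f i (m i) ≤ f i u := by
  choose m h1 h2 using fun i => exists_min_image U (f i) hU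
  exact ⟨m, h1, h2⟩

lemma exists_double [DecidableEq V] [Fintype I] [DecidableEq I]
    {f : I → V → ℕ} (hf : ∀ i, Function.Injective (f i))
    {U : Finset V} {m : I → V} (hmU : ∀ i, m i ∈ U) (hm : ∀ i, ∀ u ∈ U, f i (m i) ≤ f i u)
    (hU : IsDominant f U) (hcard : U.card + 1 = Fintype.card I) :
    ∃ a b, a ≠ b ∧ m a = m b ∧ ∀ i j, j ≠ i → m j = m i → i = a ∨ i = b := by
  have hsurj : ∀ u ∈ U, ∃ i, m i = u := by
    intro u hu
    obtain ⟨i, hi⟩ := hU u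
    exact ⟨i, hf i (le_antisymm (hm i u hu) (hi _ (hmU i)))⟩
  obtain ⟨a, -, b, -, hab, h⟩ := exists_ne_map_eq_of_card_lt_of_maps_to
    (s := (univ : Finset I)) (t := U) (f := m) (by rw [card_univ]; omega) (fun i _ => hmU i)
  refine ⟨a, b, hab, h, fun i j hji hij => ?_⟩
  by_contra! hcon
  by_cases hj : j = a
  · subst hj
    exact hcon.2 (injOn_ne_of_double hsurj hcard hab.symm h.symm hcon.1 hab.symm
      (hij.symm.trans h))
  · exact hji (injOn_ne_of_double hsurj hcard hab.symm h.symm hj hcon.1 hij)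

/-- A dominant set with one element missing, all of whose candidate exchange directions are
realised, extends to a full dominant set in exactly two ways. -/
lemma card_rooms_eq_two [Fintype V] [DecidableEq V] [Fintype I] [DecidableEq I]
    {f : I → V → ℕ} (hf : ∀ i, Function.Injective (f i))
    {U : Finset V} {m : I → V} (hmU : ∀ i, m i ∈ U) (hm : ∀ i, ∀ u ∈ U, f i (m i) ≤ f i u)
    (hU : IsDominant f U) (hcard : U.card + 1 = Fintype.card I)
    (hex : ∀ a, ∃ w, ∀ i ≠ a, f i (m i) < f i w) (R : Finset (Finset V))
    (hR : ∀ W, W ∈ R ↔ W.card = Fintype.card I ∧ IsDominant f W ∧ U ⊆ W) : R.card = 2 := by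
  obtain ⟨a, b, hab, hmab, hd⟩ := exists_double hf hmU hm hU hcard
  obtain ⟨v, hv⟩ := exists_isExchange (hex a).choose_spec
  obtain ⟨w, hw⟩ := exists_isExchange (hex b).choose_spec
  obtain ⟨hvU, hvd⟩ := hv.isDominant_insert hf hmU hm hU hab.symm hmab.symm
  obtain ⟨hwU, hwd⟩ := hw.isDominant_insert hf hmU hm hU hab hmab
  have hvw : v ≠ w := by
    rintro rfl
    exact absurd (hv.le hmU hU) (not_le.2 (hw.1 a hab))
  rw [card_eq_two]
  refine ⟨insert v U, insert w U, fun h => ?_, ?_⟩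
  · have : v ∈ insert w U := h ▸ mem_insert_self v U
    rcases mem_insert.1 this with h | h
    exacts [hvw h, hvU h]
  · ext W
    rw [hR, mem_insert, mem_singleton]
    constructor
    · rintro ⟨hWc, hWd, hUW⟩
      obtain ⟨x, hxU, rfl⟩ : ∃ x, x ∉ U ∧ insert x U = W :=
        (covBy_iff_card_sdiff_eq_one.2 ⟨hUW, by
          rw [card_sdiff_of_subset hUW]; omega⟩).exists_finset_insert
      obtain ⟨i, ⟨j, hji, hj⟩, hx⟩ :=
        exists_isExchange_of_isDominant_insert hf hmU hm hcard hxU hWd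
      rcases hd i j hji hj with rfl | rfl
      · exact .inl (by rw [hx.eq hf hv])
      · exact .inr (by rw [hx.eq hf hw])
    · rintro (rfl | rfl)
      · exact ⟨by rw [card_insert_of_notMem hvU, hcard], hvd, subset_insert _ _⟩
      · exact ⟨by rw [card_insert_of_notMem hwU, hcard], hwd, subset_insert _ _⟩

/-- A set of full size that misses some colour has an even number of facets carrying exactly the
colours other than `a`. -/
lemma even_card_facets [DecidableEq V] [Fintype I] [DecidableEq I]
    (c : V → I) (a : I) {W : Finset V} (hW : W.card = Fintype.card I)
    (hc : W.image c ≠ univ) (D : Finset (Finset V))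
    (hD : ∀ U, U ∈ D ↔ U.card + 1 = Fintype.card I ∧ U.image c = univ.erase a ∧ U ⊆ W) :
    Even D.card := by
  rcases D.eq_empty_or_nonempty with rfl | ⟨U, hUD⟩
  · simp
  obtain ⟨hUc, hUi, hUW⟩ := (hD U).1 hUD
  obtain ⟨x, hxU, rfl⟩ : ∃ x, x ∉ U ∧ insert x U = W :=
    (covBy_iff_card_sdiff_eq_one.2 ⟨hUW, by
      rw [card_sdiff_of_subset hUW]; omega⟩).exists_finset_insert
  have hEcard : (univ.erase a : Finset I).card + 1 = Fintype.card I := by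
    rw [card_erase_add_one (mem_univ a), card_univ]
  have hinj : ∀ {Y : Finset V}, Y.card + 1 = Fintype.card I → Y.image c = univ.erase a →
      Set.InjOn c Y := by
    intro Y hY hYi
    exact card_image_iff.1 (by rw [hYi]; omega)
  have hxa : c x ≠ a := by
    intro h
    apply hc
    rw [image_insert, hUi, h, insert_erase (mem_univ a)]
  obtain ⟨y, hyU, hyx⟩ : ∃ y ∈ U, c y = c x := by
    rw [← mem_image, hUi]; simpa using hxa
  have hxy : x ≠ y := by rintro rfl; exact hxU hyU
  have hDeq : D = {(insert x U).erase x, (insert x U).erase y} := by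
    ext Y
    rw [hD, mem_insert, mem_singleton]
    constructor
    · rintro ⟨hYc, hYi, hYW⟩
      obtain ⟨z, hzY, hz⟩ : ∃ z, z ∉ Y ∧ insert z Y = insert x U :=
        (covBy_iff_card_sdiff_eq_one.2 ⟨hYW, by
          rw [card_sdiff_of_subset hYW]; omega⟩).exists_finset_insert
      have hY : Y = (insert x U).erase z := by rw [← hz, erase_insert hzY]
      by_cases hzx : z = x
      · exact .inl (hzx ▸ hY)
      by_cases hzy : z = y
      · exact .inr (hzy ▸ hY)
      · refine absurd (hinj hYc hYi ?_ ?_ hyx) hxy.symm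
        · rw [hY]; simp [hyU, Ne.symm hzy]
        · rw [hY]; simp [Ne.symm hzx]
    · rintro (rfl | rfl)
      · rw [erase_insert hxU]; exact ⟨hUc, hUi, hUW⟩
      · refine ⟨?_, ?_, erase_subset _ _⟩
        · rw [card_erase_add_one (mem_insert_of_mem hyU), hW]
        · rw [← hUi]
          ext i
          simp only [mem_image, mem_erase, mem_insert]
          constructor
          · rintro ⟨u, ⟨-, rfl | hu⟩, rfl⟩
            exacts [⟨y, hyU, hyx⟩, ⟨u, hu, rfl⟩]
          · rintro ⟨u, hu, rfl⟩
            by_cases huy : u = y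
            · exact ⟨x, ⟨hxy, .inl rfl⟩, by rw [huy, hyx]⟩
            · exact ⟨u, ⟨huy, .inr hu⟩, rfl⟩
  rw [hDeq, card_pair]
  · exact even_two
  · intro h
    have : y ∈ (insert x U).erase x := mem_erase.2 ⟨hxy.symm, mem_insert_of_mem hyU⟩
    rw [h] at this
    simp at this

/-- Scarf's lemma with the slack vertices `Sum.inr k` made explicit. -/
lemma exists_colorful_of_slack {T : Type*} [Fintype T] [DecidableEq T] [Nonempty T]
    [Fintype I] [DecidableEq I] [Nontrivial I]
    {f : I → T ⊕ I → ℕ} (hf : ∀ i, Function.Injective (f i))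
    (hlow : ∀ i v, v ≠ .inr i → f i (.inr i) < f i v)
    (hhigh : ∀ i k t, k ≠ i → f i (.inl t) < f i (.inr k)) (c : T → I) :
    ∃ W : Finset (T ⊕ I), IsDominant f W ∧ W.image (Sum.elim c id) = univ := by
  classical
  by_contra! hno
  obtain ⟨a⟩ : Nonempty I := inferInstance
  set col : T ⊕ I → I := Sum.elim c id with hcol
  set n := Fintype.card I with hn
  have hn1 : 1 < n := Fintype.one_lt_card
  let rooms : Finset (Finset (T ⊕ I)) := univ.filter fun W => W.card = n ∧ IsDominant f W
  let doors : Finset (Finset (T ⊕ I)) := univ.filter fun U =>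
    U.card + 1 = n ∧ U.image col = univ.erase a ∧ IsDominant f U
  let E : Finset (T ⊕ I) := (univ.erase a).image .inr
  have hEmem : ∀ v, v ∈ E ↔ ∃ k, k ≠ a ∧ .inr k = v := by simp [E]
  have hEcard : E.card + 1 = n := by
    rw [card_image_of_injective _ Sum.inr_injective, card_erase_add_one (mem_univ a), card_univ]
  have hEdom : IsDominant f E := by
    intro v
    by_cases hv : ∃ k, k ≠ a ∧ .inr k = v
    · obtain ⟨k, -, rfl⟩ := hv
      refine ⟨k, fun u _ => ?_⟩
      by_cases hu : u = .inr k
      · rw [hu]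
      · exact (hlow k u hu).le
    · refine ⟨a, fun u hu => ?_⟩
      obtain ⟨k, hk, rfl⟩ := (hEmem u).1 hu
      rcases v with t | j
      · exact (hhigh a k t hk).le
      · obtain rfl : j = a := by
          by_contra hj
          exact hv ⟨j, hj, rfl⟩
        exact (hlow j _ (by simpa using hk)).le
  have hEdoor : E ∈ doors := by
    simp only [doors, mem_filter, mem_univ, true_and]
    refine ⟨hEcard, ?_, hEdom⟩
    rw [image_image]
    simp [hcol, Function.comp_def]
  have hroomsE : (rooms.filter fun W => E ⊆ W).card = 1 := by
    obtain ⟨m, hmE, hm⟩ := exists_min_choice f (U := E) (card_pos.1 (by omega))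
    have hmi : ∀ i ≠ a, m i = .inr i := by
      intro i hi
      by_contra h
      exact absurd (hm i (.inr i) ((hEmem _).2 ⟨i, hi, rfl⟩)) (not_le.2 (hlow i _ h))
    obtain ⟨k, hk, hka⟩ := (hEmem _).1 (hmE a)
    obtain ⟨t⟩ : Nonempty T := inferInstance
    obtain ⟨v, hv⟩ := exists_isExchange (f := f) (m := m) (a := a) (w := .inl t) (by
      intro i hi
      rw [hmi i hi]
      exact hlow i _ (by simp))
    obtain ⟨hvE, hvd⟩ := hv.isDominant_insert hf hmE hm hEdom hk ((hmi k hk).trans hka)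
    rw [card_eq_one]
    refine ⟨insert v E, ?_⟩
    ext W
    simp only [rooms, mem_filter, mem_univ, true_and, mem_singleton]
    constructor
    · rintro ⟨⟨hWc, hWd⟩, hEW⟩
      obtain ⟨x, hxE, rfl⟩ : ∃ x, x ∉ E ∧ insert x E = W :=
        (covBy_iff_card_sdiff_eq_one.2 ⟨hEW, by
          rw [card_sdiff_of_subset hEW]; omega⟩).exists_finset_insert
      obtain ⟨i, ⟨j, hji, hj⟩, hx⟩ :=
        exists_isExchange_of_isDominant_insert hf hmE hm hEcard hxE hWd
      by_cases hia : i = a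
      · subst hia
        rw [hx.eq hf hv]
      exfalso
      rw [hmi i hia] at hj
      have hja : j = a := by
        by_contra hja
        rw [hmi j hja] at hj
        exact hji (Sum.inr_injective hj)
      subst hja
      have h1 := hx.1 j hji
      rw [hj] at h1
      rcases x with s | l
      · exact absurd h1 (hhigh j i s hia).not_gt
      · by_cases hlj : l = j
        · subst hlj
          exact absurd h1 (hlow l (.inr i) (by simpa using hia)).not_gt
        · exact hxE ((hEmem _).2 ⟨l, hlj, rfl⟩)
    · rintro rfl
      exact ⟨⟨by rw [card_insert_of_notMem hvE, hEcard], hvd⟩, subset_insert _ _⟩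
  have hrooms : ∀ U ∈ doors.erase E, (rooms.filter fun W => U ⊆ W).card = 2 := by
    intro U hU
    simp only [doors, mem_erase, mem_filter, mem_univ, true_and] at hU
    obtain ⟨hUE, hUc, hUi, hUd⟩ := hU
    obtain ⟨m, hmU, hm⟩ := exists_min_choice f (U := U) (card_pos.1 (by omega))
    have hmr : ∀ i k, k ≠ i → m i ≠ .inr k := by
      intro i k hki hmik
      have hsub : U ⊆ (univ.erase i).image .inr := by
        intro u hu
        have h1 := hm i u hu
        rw [hmik] at h1
        rcases u with t | l
        · exact absurd h1 (not_le.2 (hhigh i k t hki))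
        · simp only [mem_image, mem_erase, mem_univ, and_true]
          refine ⟨l, ?_, rfl⟩
          rintro rfl
          exact absurd h1 (not_le.2 (hlow l _ (by simpa using hki)))
      have heq : U = (univ.erase i).image .inr := by
        refine eq_of_subset_of_card_le hsub ?_
        rw [card_image_of_injective _ Sum.inr_injective, card_erase_of_mem (mem_univ i),
          card_univ]
        omega
      have himg : U.image col = univ.erase i := by
        rw [heq, image_image]
        simp [hcol, Function.comp_def]
      have hia : i = a := by
        by_contra hia
        have : i ∈ U.image col := by rw [hUi]; simpa using hia
        rw [himg] at this
        simp at this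
      exact hUE (by rw [heq, hia])
    refine card_rooms_eq_two hf hmU hm hUd hUc (fun b => ⟨.inr b, fun i hi => ?_⟩) _ ?_
    · rcases h : m i with t | k
      · exact hhigh i b t hi.symm
      · have hki : k = i := by
          by_contra hki
          exact hmr i k hki h
        subst hki
        exact hlow k _ (by simpa using hi.symm)
    · intro W
      simp [rooms, and_assoc, hn]
  have hfacets : ∀ W ∈ rooms, Even (doors.filter fun U => U ⊆ W).card := by
    intro W hW
    simp only [rooms, mem_filter, mem_univ, true_and] at hW
    refine even_card_facets col a hW.1 (hno W hW.2) _ fun U => ?_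
    simp only [doors, mem_filter, mem_univ, true_and]
    exact ⟨fun h => ⟨h.1.1, h.1.2.1, h.2⟩, fun h => ⟨⟨h.1, h.2.1, hW.2.mono h.2.2⟩, h.2.2⟩⟩
  have hcount := sum_card_bipartiteAbove_eq_sum_card_bipartiteBelow (s := doors) (t := rooms)
    (fun U W : Finset (T ⊕ I) => U ⊆ W)
  simp only [bipartiteAbove, bipartiteBelow] at hcount
  rw [← add_sum_erase _ _ hEdoor, hroomsE, sum_congr rfl hrooms, sum_const, smul_eq_mul] at hcount
  have heven := even_sum _ hfacets
  rw [← hcount] at heven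
  exact absurd heven (by simp [Nat.even_add_one, add_comm 1])

/-- **Scarf's lemma**. -/
theorem scarf_lemma {T : Type*} [Fintype T] [Nonempty T] [Fintype I] [Nontrivial I]
    {g : I → T → ℕ} (hg : ∀ i, Function.Injective (g i)) (c : T → I) :
    ∃ (σ : Finset T) (C : Finset I), (∀ i ∈ C, ∃ s ∈ σ, c s = i) ∧
      ∀ t, ∃ i ∈ C, ∀ s ∈ σ, g i t ≤ g i s := by
  classical
  obtain ⟨B, hB⟩ : ∃ B, ∀ i t, g i t < B := by
    refine ⟨(univ.sup fun p : I × T => g p.1 p.2) + 1, fun i t => Nat.lt_succ_of_le ?_⟩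
    exact le_sup (f := fun p : I × T => g p.1 p.2) (mem_univ (i, t))
  let e := Fintype.equivFin I
  let f : I → T ⊕ I → ℕ := fun i =>
    Sum.elim (fun t => g i t + 1) fun k => if k = i then 0 else B + 1 + e k
  have hf : ∀ i, Function.Injective (f i) := by
    rintro i (t | k) (s | l) h
    · simp only [f, Sum.elim_inl] at h
      exact congrArg _ (hg i (by omega))
    · simp only [f, Sum.elim_inl, Sum.elim_inr] at h
      have := hB i t
      split_ifs at h
      omega
    · simp only [f, Sum.elim_inl, Sum.elim_inr] at h
      have := hB i s
      split_ifs at h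
      omega
    · simp only [f, Sum.elim_inr] at h
      split_ifs at h with h1 h2
      · rw [h1, h2]
      · omega
      · omega
      · exact congrArg _ (e.injective (Fin.ext (by omega)))
  obtain ⟨W, hWd, hWc⟩ := exists_colorful_of_slack hf
    (by
      rintro i (t | k) h
      · simp [f]
      · have hk : k ≠ i := by simpa using h
        simp only [f, Sum.elim_inr, if_neg hk, if_true]
        omega)
    (by
      intro i k t h
      have := hB i t
      simp only [f, Sum.elim_inl, Sum.elim_inr, if_neg h]
      omega) c
  refine ⟨univ.filter fun t => .inl t ∈ W, univ.filter fun i => .inr i ∉ W, ?_, ?_⟩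
  · intro i hi
    have : i ∈ W.image (Sum.elim c id) := hWc ▸ mem_univ i
    obtain ⟨u | k, hu, hui⟩ := mem_image.1 this
    · exact ⟨u, by simpa using hu, hui⟩
    · obtain rfl : k = i := hui
      simp [hu] at hi
  · intro t
    obtain ⟨i, hi⟩ := hWd (.inl t)
    refine ⟨i, ?_, fun s hs => ?_⟩
    · simp only [mem_filter, mem_univ, true_and]
      intro hiW
      have := hi _ hiW
      simp [f] at this
    · have := hi (.inl s) (by simpa using hs)
      simpa [f] using this

/-- Scarf's lemma on the grid of mesh `1 / N` in the simplex: a cluster of close grid points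
whose labels exhaust all coordinates on which the cluster is not small. -/
lemma exists_grid_cluster [Fintype I] [Nontrivial I] (N : ℕ) (c : (I → ℕ) → I) :
    ∃ s : I → ℕ, ∑ i, s i = N ∧ ∀ i, s i ≤ Fintype.card I ∨
      ∃ t : I → ℕ, ∑ j, t j = N ∧ c t = i ∧
        ∀ j, s j ≤ t j + Fintype.card I ∧ t j ≤ s j + Fintype.card I := by
  classical
  let T := {t : I → Fin (N + 1) // ∑ i, (t i : ℕ) = N}
  have mk : ∀ t : I → ℕ, ∑ i, t i = N → ∃ s : T, ∀ i, (s.1 i : ℕ) = t i := by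
    intro t ht
    have hlt : ∀ i, t i < N + 1 := fun i =>
      Nat.lt_succ_of_le (ht ▸ single_le_sum (fun j _ => Nat.zero_le (t j)) (mem_univ i))
    exact ⟨⟨fun i => ⟨t i, hlt i⟩, ht⟩, fun i => rfl⟩
  obtain ⟨a⟩ : Nonempty I := inferInstance
  have : Nonempty T := ⟨(mk (Pi.single a N) (by simp)).choose⟩
  let e := Fintype.equivFin T
  let K := Fintype.card T
  let g : I → T → ℕ := fun i t => e t + K * (t.1 i : ℕ)
  have hgdiv : ∀ i t, g i t / K = (t.1 i : ℕ) := by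
    intro i t
    have hK : 0 < K := Fintype.card_pos
    simp only [g]
    rw [Nat.add_mul_div_left _ _ hK, Nat.div_eq_of_lt (e t).2, zero_add]
  have hgmod : ∀ i t, g i t % K = e t := by
    intro i t
    simp only [g]
    rw [Nat.add_mul_mod_self_left, Nat.mod_eq_of_lt (e t).2]
  have hg : ∀ i, Function.Injective (g i) := by
    intro i t s h
    apply e.injective
    apply Fin.ext
    rw [← hgmod i, ← hgmod i, h]
  obtain ⟨σ, C, hcol, hdom⟩ := scarf_lemma hg fun t => c fun i => t.1 i
  have hdom' : ∀ t : T, ∃ i ∈ C, ∀ s ∈ σ, (t.1 i : ℕ) ≤ s.1 i := by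
    intro t
    obtain ⟨i, hi, h⟩ := hdom t
    refine ⟨i, hi, fun s hs => ?_⟩
    rw [← hgdiv, ← hgdiv]
    exact Nat.div_le_div_right (h s hs)
  obtain ⟨a, ha, -⟩ := hdom' this.some
  obtain ⟨s₀, hs₀, -⟩ := hcol a ha
  choose μ hμ hmin using fun i => exists_min_image σ (fun s : T => (s.1 i : ℕ)) ⟨s₀, hs₀⟩
  let m : I → ℕ := fun i => (μ i).1 i
  have hm : ∀ i, ∀ s ∈ σ, m i ≤ s.1 i := hmin
  have hsum : N < ∑ i ∈ C, (m i + 1) := by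
    by_contra! hle
    let p : I → ℕ := fun i => (if i ∈ C then m i + 1 else 0) +
      Pi.single (M := fun _ => ℕ) a (N - ∑ i ∈ C, (m i + 1)) i
    have hp : ∑ i, p i = N := by
      simp only [p]
      rw [sum_add_distrib, sum_ite_mem, univ_inter, sum_pi_single' ]
      simp only [mem_univ, if_true]
      omega
    obtain ⟨t, ht⟩ := mk p hp
    obtain ⟨i, hi, h⟩ := hdom' t
    have h1 := h (μ i) (hμ i)
    rw [ht] at h1
    simp only [p, if_pos hi, m] at h1
    omega
  rw [sum_add_distrib, sum_const, smul_eq_mul, mul_one] at hsum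
  have hCn : C.card ≤ Fintype.card I := card_le_univ C
  have hin : ∀ i ∈ C, ∀ s ∈ σ, (s.1 i : ℕ) ≤ m i + Fintype.card I := by
    intro i hi s hs
    have h1 : ∑ j ∈ C, (s.1 j : ℕ) ≤ N :=
      (sum_le_sum_of_subset (subset_univ C)).trans s.2.le
    rw [← add_sum_erase _ _ hi] at h1 hsum
    have h2 : ∑ j ∈ C.erase i, m j ≤ ∑ j ∈ C.erase i, (s.1 j : ℕ) :=
      sum_le_sum fun j _ => hm j s hs
    omega
  have hout : ∀ i ∉ C, ∀ s ∈ σ, (s.1 i : ℕ) ≤ Fintype.card I := by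
    intro i hi s hs
    have h1 : ∑ j ∈ insert i C, (s.1 j : ℕ) ≤ N :=
      (sum_le_sum_of_subset (subset_univ _)).trans s.2.le
    rw [sum_insert hi] at h1
    have h2 : ∑ j ∈ C, m j ≤ ∑ j ∈ C, (s.1 j : ℕ) := sum_le_sum fun j _ => hm j s hs
    omega
  refine ⟨fun i => s₀.1 i, s₀.2, fun i => ?_⟩
  by_cases hi : i ∈ C
  · obtain ⟨t, ht, hti⟩ := hcol i hi
    refine .inr ⟨fun j => t.1 j, t.2, hti, fun j => ?_⟩
    by_cases hj : j ∈ C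
    · have h1 := hin j hj s₀ hs₀
      have h2 := hin j hj t ht
      have h3 := hm j s₀ hs₀
      have h4 := hm j t ht
      dsimp only
      omega
    · have h1 := hout j hj s₀ hs₀
      have h2 := hout j hj t ht
      dsimp only
      omega
  · exact .inl (hout i hi s₀ hs₀)

end Scarf

/-- A Knaster–Kuratowski–Mazurkiewicz-type covering theorem: for a closed cover of the standard
simplex indexed by its vertices, some point lies in every member indexed by its support. -/
theorem exists_mem_stdSimplex_of_closed_cover {I : Type*} [Fintype I] [Nontrivial I]
    {F : I → Set (I → ℝ)} (hF : ∀ i, IsClosed (F i))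
    (hcover : ∀ z ∈ stdSimplex ℝ I, ∃ i, z ∈ F i) :
    ∃ z ∈ stdSimplex ℝ I, ∀ i, 0 < z i → z ∈ F i := by
  classical
  have approx : ∀ N : ℕ, ∃ z ∈ stdSimplex ℝ I, ∀ i, z i ≤ Fintype.card I * (1 / ((N : ℝ) + 1)) ∨
      ∃ w ∈ F i, dist z w ≤ Fintype.card I * (1 / ((N : ℝ) + 1)) := by
    intro N
    have hN : (0 : ℝ) < (N : ℝ) + 1 := by positivity
    let φ : (I → ℕ) → I → ℝ := fun t i => t i / ((N : ℝ) + 1)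
    have hφ : ∀ t : I → ℕ, ∑ i, t i = N + 1 → φ t ∈ stdSimplex ℝ I := by
      intro t ht
      refine ⟨fun i => by positivity, ?_⟩
      simp only [φ]
      rw [← sum_div, ← Nat.cast_sum, ht, Nat.cast_add_one, div_self hN.ne']
    choose! c hc using hcover
    obtain ⟨s, hs, h⟩ := exists_grid_cluster (N + 1) fun t => c (φ t)
    refine ⟨φ s, hφ s hs, fun i => (h i).imp (fun hi => ?_) ?_⟩
    · simp only [φ]
      rw [mul_one_div]
      gcongr
    · rintro ⟨t, ht, rfl, hst⟩
      refine ⟨φ t, hc _ (hφ t ht), (dist_pi_le_iff (by positivity)).2 fun j => ?_⟩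
      have h1 : (s j : ℝ) ≤ t j + Fintype.card I := by exact_mod_cast (hst j).1
      have h2 : (t j : ℝ) ≤ s j + Fintype.card I := by exact_mod_cast (hst j).2
      simp only [φ]
      rw [Real.dist_eq, ← sub_div, abs_div, abs_of_pos hN, mul_one_div]
      gcongr
      rw [abs_le]
      constructor <;> linarith
  choose z hz h using approx
  obtain ⟨x, hx, θ, hθ, hlim⟩ := (isCompact_stdSimplex (𝕜 := ℝ) I).tendsto_subseq hz
  refine ⟨x, hx, fun i hi => ?_⟩
  have hε : Filter.Tendsto (fun n => (Fintype.card I : ℝ) * (1 / ((θ n : ℝ) + 1))) Filter.atTop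
      (nhds 0) := by
    simpa using ((tendsto_one_div_add_atTop_nhds_zero_nat (𝕜 := ℝ)).comp
      hθ.tendsto_atTop).const_mul (Fintype.card I : ℝ)
  rw [← (hF i).closure_eq, Metric.mem_closure_iff]
  intro ε hε0
  have hzi : Filter.Tendsto (fun n => z (θ n) i) Filter.atTop (nhds (x i)) :=
    (tendsto_pi_nhds.1 hlim) i
  have e1 := hε.eventually_lt hzi hi
  have e2 := hε.eventually (gt_mem_nhds (half_pos hε0))
  have e3 := (Metric.tendsto_nhds.1 hlim) _ (half_pos hε0)
  obtain ⟨n, h1, h2, h3⟩ := (e1.and (e2.and e3)).exists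
  rcases h (θ n) i with h4 | ⟨w, hw, h4⟩
  · exact absurd h4 (not_le.2 h1)
  · refine ⟨w, hw, ?_⟩
    have := dist_triangle x (z (θ n)) w
    rw [dist_comm x (z (θ n))] at this
    simp only [Function.comp_apply] at h3
    linarith

/-- Existence of symmetric equilibria. -/
lemma exists_symmetric_equilibrium {I : Type*} [Fintype I] [Nontrivial I] (M : I → I → ℝ) :
    ∃ z ∈ stdSimplex ℝ I, ∀ i, 0 < z i → ∀ k, ∑ j, z j * M k j ≤ ∑ j, z j * M i j := by
  refine exists_mem_stdSimplex_of_closed_cover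
    (F := fun i => {z | ∀ k, ∑ j, z j * M k j ≤ ∑ j, z j * M i j}) (fun i => ?_) fun z _ => ?_
  · simp only [Set.ofPred_forall]
    exact isClosed_iInter fun k => isClosed_le (by fun_prop) (by fun_prop)
  · exact Finite.exists_max fun i => ∑ j, z j * M i j

/-- A mixed strategy is optimal exactly when its support consists of optimal pure strategies. -/
lemma forall_isMixed_sum_le_iff {S : Type*} [Fintype S] {x : S → ℝ} (hx : IsMixed x) (v : S → ℝ) :
    (∀ x', IsMixed x' → ∑ i, x' i * v i ≤ ∑ i, x i * v i) ↔
      ∀ i, 0 < x i → ∀ k, v k ≤ v i := by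
  classical
  constructor
  · intro h i hi k
    have hpure : ∀ k, v k ≤ ∑ i, x i * v i := by
      intro k
      have := h (Pi.single k 1) (single_mem_stdSimplex ℝ k)
      simpa [Pi.single_apply] using this
    have hzero : ∑ j, x j * (∑ i, x i * v i - v j) = 0 := by
      simp only [mul_sub, sum_sub_distrib]
      rw [← sum_mul, hx.2, one_mul, sub_self]
    have := (sum_eq_zero_iff_of_nonneg fun j _ =>
      mul_nonneg (hx.1 j) (sub_nonneg.2 (hpure j))).1 hzero i (mem_univ i)
    rcases mul_eq_zero.1 this with h0 | h0
    · exact absurd h0 hi.ne'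
    · linarith [hpure k]
  · intro h x' hx'
    obtain ⟨i, hi⟩ : ∃ i, 0 < x i := by
      by_contra! hcon
      have := sum_nonpos fun i (_ : i ∈ univ) => hcon i
      linarith [hx.2]
    have h1 : ∑ j, x j * v j = v i := by
      rw [← one_mul (v i), ← hx.2, sum_mul]
      refine sum_congr rfl fun j _ => ?_
      rcases (hx.1 j).eq_or_lt with h0 | h0
      · simp [← h0]
      · rw [le_antisymm (h i hi j) (h j h0 i)]
    rw [h1, ← one_mul (v i), ← hx'.2, sum_mul]
    exact sum_le_sum fun j _ => mul_le_mul_of_nonneg_left (h i hi j) (hx'.1 j)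

section Bimatrix

variable {R C : Type*} [Fintype R] [Fintype C]

lemma bimatPay_eq_sum_left (G : R → C → ℝ) (x : R → ℝ) (y : C → ℝ) :
    bimatPay G x y = ∑ i, x i * ∑ j, y j * G i j := by
  simp only [bimatPay, mul_sum, mul_assoc]

lemma bimatPay_eq_sum_right (G : R → C → ℝ) (x : R → ℝ) (y : C → ℝ) :
    bimatPay G x y = ∑ j, y j * ∑ i, x i * G i j := by
  rw [bimatPay, sum_comm]
  simp only [mul_sum]
  exact sum_congr rfl fun j _ => sum_congr rfl fun i _ => by ring

lemma isNash2_iff {A B : R → C → ℝ} {x : R → ℝ} {y : C → ℝ} :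
    IsNash2 A B x y ↔ IsMixed x ∧ IsMixed y ∧
      (∀ i, 0 < x i → ∀ k, ∑ j, y j * A k j ≤ ∑ j, y j * A i j) ∧
      ∀ j, 0 < y j → ∀ k, ∑ i, x i * B i k ≤ ∑ i, x i * B i j := by
  refine and_congr_right fun hx => and_congr_right fun hy => ?_
  simp only [bimatPay_eq_sum_left A, bimatPay_eq_sum_right B]
  exact and_congr (forall_isMixed_sum_le_iff hx _) (forall_isMixed_sum_le_iff hy _)

lemma IsNash2.swap {A B : R → C → ℝ} {x : R → ℝ} {y : C → ℝ} (h : IsNash2 A B x y) :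
    IsNash2 (fun j i => B i j) (fun j i => A i j) y x := by
  rw [isNash2_iff] at h ⊢
  exact ⟨h.2.1, h.1, h.2.2.2, h.2.2.1⟩

lemma exists_isNash2_of_pos [Nonempty R] [Nonempty C] {A B : R → C → ℝ}
    (hA : ∀ i j, 0 < A i j) (hB : ∀ i j, 0 < B i j) : ∃ x y, IsNash2 A B x y := by
  let M : R ⊕ C → R ⊕ C → ℝ :=
    Sum.elim (fun i => Sum.elim 0 (A i)) fun j => Sum.elim (fun i => B i j) 0
  have : Nontrivial (R ⊕ C) :=
    ⟨.inl (Classical.arbitrary R), .inr (Classical.arbitrary C), by simp⟩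
  obtain ⟨z, ⟨hz0, hz1⟩, hz⟩ := exists_symmetric_equilibrium M
  simp only [Fintype.sum_sum_type, M, Sum.forall, Sum.elim_inl, Sum.elim_inr, Pi.zero_apply,
    mul_zero, sum_const_zero, zero_add, add_zero] at hz0 hz1 hz
  obtain ⟨hx0, hy0⟩ := hz0
  obtain ⟨hzx, hzy⟩ := hz
  set x : R → ℝ := fun i => z (.inl i)
  set y : C → ℝ := fun j => z (.inr j)
  change (∑ i, x i) + ∑ j, y j = 1 at hz1
  have hxpos : 0 < ∑ i, x i := by
    refine (sum_nonneg fun i _ => hx0 i).lt_of_ne fun h => ?_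
    have hxz : ∀ i, x i = 0 := fun i =>
      (sum_eq_zero_iff_of_nonneg fun i _ => hx0 i).1 h.symm i (mem_univ i)
    obtain ⟨j, -, hj⟩ : ∃ j ∈ univ, 0 < y j := exists_lt_of_sum_lt (by simp; linarith)
    have h1 := (hzy j hj).1 (Classical.arbitrary R)
    have h2 : 0 < ∑ j, y j * A (Classical.arbitrary R) j :=
      sum_pos' (fun k _ => mul_nonneg (hy0 k) (hA _ k).le) ⟨j, mem_univ j, mul_pos hj (hA _ j)⟩
    have h3 : ∑ i, x i * B i j = 0 := sum_eq_zero fun i _ => by rw [hxz, zero_mul]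
    exact absurd (h1.trans_eq h3) (not_le.2 h2)
  have hypos : 0 < ∑ j, y j := by
    refine (sum_nonneg fun i _ => hy0 i).lt_of_ne fun h => ?_
    have hyz : ∀ i, y i = 0 := fun i =>
      (sum_eq_zero_iff_of_nonneg fun i _ => hy0 i).1 h.symm i (mem_univ i)
    obtain ⟨j, -, hj⟩ : ∃ j ∈ univ, 0 < x j := exists_lt_of_sum_lt (by simp; linarith)
    have h1 := (hzx j hj).2 (Classical.arbitrary C)
    have h2 : 0 < ∑ i, x i * B i (Classical.arbitrary C) :=
      sum_pos' (fun k _ => mul_nonneg (hx0 k) (hB k _).le) ⟨j, mem_univ j, mul_pos hj (hB j _)⟩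
    have h3 : ∑ i, y i * A j i = 0 := sum_eq_zero fun i _ => by rw [hyz, zero_mul]
    exact absurd (h1.trans_eq h3) (not_le.2 h2)
  refine ⟨fun i => x i / ∑ k, x k, fun j => y j / ∑ k, y k, isNash2_iff.2
    ⟨⟨fun i => div_nonneg (hx0 i) hxpos.le, ?_⟩, ⟨fun j => div_nonneg (hy0 j) hypos.le, ?_⟩,
      fun i hi k => ?_, fun j hj k => ?_⟩⟩
  · rw [← sum_div, div_self hxpos.ne']
  · rw [← sum_div, div_self hypos.ne']
  · have := (hzx i ((div_pos_iff_of_pos_right hxpos).1 hi)).1 k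
    simp only [div_mul_eq_mul_div, ← sum_div]
    exact div_le_div_of_nonneg_right this hypos.le
  · have := (hzy j ((div_pos_iff_of_pos_right hypos).1 hj)).2 k
    simp only [div_mul_eq_mul_div, ← sum_div]
    exact div_le_div_of_nonneg_right this hxpos.le

/-- **Nash's theorem** for bimatrix games. -/
theorem exists_isNash2 [Nonempty R] [Nonempty C] (A B : R → C → ℝ) :
    ∃ x y, IsNash2 A B x y := by
  have lower : ∀ G : R → C → ℝ, ∃ b, ∀ i j, 0 < G i j + b := by
    intro G
    obtain ⟨p, hp⟩ := Finite.exists_min fun p : R × C => G p.1 p.2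
    exact ⟨1 - G p.1 p.2, fun i j => by linarith [hp (i, j)]⟩
  obtain ⟨a, ha⟩ := lower A
  obtain ⟨b, hb⟩ := lower B
  obtain ⟨x, y, h⟩ := exists_isNash2_of_pos ha hb
  refine ⟨x, y, ?_⟩
  rw [isNash2_iff] at h ⊢
  simpa only [mul_add, sum_add_distrib, add_le_add_iff_right] using h

open Filter Topology in
/-- Against a unique equilibrium, an unused row is strictly worse than every used row: adding a
small bonus to row `k` still leaves an equilibrium at `(x, y)`. -/
lemma row_lt_of_unique {A B : R → C → ℝ} {x : R → ℝ} {y : C → ℝ} (hNash : IsNash2 A B x y)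
    (huniq : ∀ x' y', IsNash2 A B x' y' → x' = x ∧ y' = y) {k : R} (hk : x k = 0) {i : R}
    (hi : 0 < x i) : ∑ j, y j * A k j < ∑ j, y j * A i j := by
  classical
  obtain ⟨hx, hy, hxy, hyx⟩ := isNash2_iff.1 hNash
  have : Nonempty R := ⟨k⟩
  have : Nonempty C := by
    by_contra h
    rw [not_nonempty_iff] at h
    simpa using hy.2
  let ε : ℕ → ℝ := fun n => 1 / ((n : ℝ) + 1)
  have hεpos : ∀ n, 0 < ε n := fun n => Nat.one_div_pos_of_nat
  have hsum : ∀ n (y' : C → ℝ), IsMixed y' → ∀ l,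
      ∑ j, y' j * (A l j + if l = k then ε n else 0) =
        (∑ j, y' j * A l j) + if l = k then ε n else 0 := by
    intro n y' hy' l
    simp only [mul_add, sum_add_distrib]
    rw [← sum_mul, hy'.2, one_mul]
  choose X Y hXY using fun n => exists_isNash2 (fun l j => A l j + if l = k then ε n else 0) B
  have hX : ∀ n, IsMixed (X n) := fun n => (hXY n).1
  have hY : ∀ n, IsMixed (Y n) := fun n => (hXY n).2.1
  have hrow : ∀ n l, 0 < X n l → ∀ l',
      (∑ j, Y n j * A l' j) + (if l' = k then ε n else 0) ≤
        (∑ j, Y n j * A l j) + if l = k then ε n else 0 := by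
    intro n l hl l'
    have := (isNash2_iff.1 (hXY n)).2.2.1 l hl l'
    rwa [hsum n _ (hY n), hsum n _ (hY n)] at this
  have hcol : ∀ n j, 0 < Y n j → ∀ j', ∑ l, X n l * B l j' ≤ ∑ l, X n l * B l j :=
    fun n => (isNash2_iff.1 (hXY n)).2.2.2
  obtain ⟨⟨x', y'⟩, hmem, θ, hθ, hlim⟩ :=
    ((isCompact_stdSimplex (𝕜 := ℝ) R).prod (isCompact_stdSimplex (𝕜 := ℝ) C)).tendsto_subseq
      (x := fun n => (X n, Y n)) fun n => ⟨hX n, hY n⟩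
  have hXlim : ∀ l, Tendsto (fun n => X (θ n) l) atTop (𝓝 (x' l)) :=
    tendsto_pi_nhds.1 ((continuous_fst.tendsto _).comp hlim)
  have hYlim : ∀ j, Tendsto (fun n => Y (θ n) j) atTop (𝓝 (y' j)) :=
    tendsto_pi_nhds.1 ((continuous_snd.tendsto _).comp hlim)
  have hεlim : Tendsto (fun n => ε (θ n)) atTop (𝓝 0) :=
    (tendsto_one_div_add_atTop_nhds_zero_nat (𝕜 := ℝ)).comp hθ.tendsto_atTop
  have hAlim : ∀ l, Tendsto (fun n => (∑ j, Y (θ n) j * A l j) + if l = k then ε (θ n) else 0)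
      atTop (𝓝 (∑ j, y' j * A l j)) := by
    intro l
    have h1 : Tendsto (fun n => if l = k then ε (θ n) else 0) atTop (𝓝 0) := by
      split_ifs
      exacts [hεlim, tendsto_const_nhds]
    simpa using (tendsto_finsetSum univ fun j _ => (hYlim j).mul_const (A l j)).add h1
  have hBlim : ∀ j, Tendsto (fun n => ∑ l, X (θ n) l * B l j) atTop (𝓝 (∑ l, x' l * B l j)) :=
    fun j => tendsto_finsetSum univ fun l _ => (hXlim l).mul_const (B l j)
  obtain ⟨rfl, rfl⟩ : x' = x ∧ y' = y := by
    refine huniq x' y' (isNash2_iff.2 ⟨hmem.1, hmem.2, fun l hl l' => ?_, fun j hj j' => ?_⟩)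
    · refine le_of_tendsto_of_tendsto (hAlim l') (hAlim l) ?_
      filter_upwards [(hXlim l).eventually (lt_mem_nhds hl)] with n hn using hrow _ l hn l'
    · refine le_of_tendsto_of_tendsto (hBlim j') (hBlim j) ?_
      filter_upwards [(hYlim j).eventually (lt_mem_nhds hj)] with n hn using hcol _ j hn j'
  have hev1 : ∀ᶠ n in atTop, ∀ l l', ∑ j, y' j * A l j < ∑ j, y' j * A l' j →
      (∑ j, Y (θ n) j * A l j) + (if l = k then ε (θ n) else 0) <
        (∑ j, Y (θ n) j * A l' j) + if l' = k then ε (θ n) else 0 := by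
    simp only [eventually_all]
    exact fun l l' h => (hAlim l).eventually_lt (hAlim l') h
  have hev2 : ∀ᶠ n in atTop, ∀ j, 0 < y' j → 0 < Y (θ n) j := by
    simp only [eventually_all]
    exact fun j hj => (hYlim j).eventually (lt_mem_nhds hj)
  obtain ⟨n, h1, h2⟩ := (hev1.and hev2).exists
  have hXeq : X (θ n) = x' := by
    refine (huniq _ y' (isNash2_iff.2 ⟨hX _, hy, fun l hl l' => ?_,
      fun j hj => hcol _ j (h2 j hj)⟩)).1
    by_contra! hlt
    exact absurd (hrow _ l hl l') (not_le.2 (h1 l l' hlt))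
  have hbest : ∀ l, 0 < x' l → ∀ l',
      (∑ j, Y (θ n) j * A l' j) + (if l' = k then ε (θ n) else 0) ≤ ∑ j, Y (θ n) j * A l j := by
    intro l hl l'
    have hlk : l ≠ k := by
      rintro rfl
      exact hl.ne' hk
    simpa [hlk] using hrow (θ n) l (hXeq.symm ▸ hl) l'
  have hYeq : Y (θ n) = y' := by
    refine (huniq x' _ (isNash2_iff.2 ⟨hx, hY _, fun l hl l' => ?_, fun j hj => ?_⟩)).2
    · refine le_trans (le_add_of_nonneg_right ?_) (hbest l hl l')
      split_ifs
      exacts [(hεpos _).le, le_rfl]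
    · exact hXeq ▸ hcol (θ n) j hj
  have := hbest i hi k
  rw [hYeq, if_pos rfl] at this
  linarith [hεpos (θ n)]

lemma pure_lt_of_unique [DecidableEq R] {A B : R → C → ℝ} {x : R → ℝ} {y : C → ℝ}
    (hNash : IsNash2 A B x y) (huniq : ∀ x' y', IsNash2 A B x' y' → x' = x ∧ y' = y)
    {k : R} (hk : x k = 0) :
    bimatPay A (fun a => if a = k then 1 else 0) y < bimatPay A x y := by
  have hx := hNash.1
  simp only [bimatPay_eq_sum_left, ite_mul, one_mul, zero_mul, sum_ite_eq', mem_univ, if_true]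
  have hone : ∑ j, y j * A k j = ∑ i, x i * ∑ j, y j * A k j := by rw [← sum_mul, hx.2, one_mul]
  rw [hone]
  obtain ⟨i, -, hi⟩ : ∃ i ∈ univ, 0 < x i := exists_lt_of_sum_lt (by simp [hx.2])
  refine sum_lt_sum (fun l _ => ?_)
    ⟨i, mem_univ i, mul_lt_mul_of_pos_left (row_lt_of_unique hNash huniq hk hi) hi⟩
  rcases (hx.1 l).eq_or_lt with h | h
  · simp [← h]
  · exact (mul_lt_mul_of_pos_left (row_lt_of_unique hNash huniq hk h) h).le

end Bimatrix

/-- Norde's theorem: a unique Nash equilibrium of a two-player finite game is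
quasi-strict. -/
theorem unique_equilibrium_quasi_strict
    [Fintype S1] [Fintype S2] [DecidableEq S1] [DecidableEq S2]
    (A B : S1 → S2 → ℝ) (x : S1 → ℝ) (y : S2 → ℝ)
    (hNash : IsNash2 A B x y)
    (huniq : ∀ x' y', IsNash2 A B x' y' → x' = x ∧ y' = y) :
    (∀ i : S1, x i = 0 →
      bimatPay A (fun a => if a = i then 1 else 0) y < bimatPay A x y) ∧
    (∀ j : S2, y j = 0 →
      bimatPay B x (fun b => if b = j then 1 else 0) < bimatPay B x y) := by
  refine ⟨fun i hi => pure_lt_of_unique hNash huniq hi, fun j hj => ?_⟩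
  have h := pure_lt_of_unique hNash.swap (fun y' x' h => (huniq x' y' h.swap).symm) hj
  rw [bimatPay_eq_sum_left, bimatPay_eq_sum_left] at h
  rwa [bimatPay_eq_sum_right, bimatPay_eq_sum_right]
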